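/- If G is a bridgeless finite multigraph with |W(G)| ≤ 2, where W(G) denotes the set of vertices of G of degree larger than 3, then F(G,q) ≠ 0 for all real q with 1 < q < 2. -/

import Mathlib

/-- A finite multigraph on vertex type `V` with edge type `E`: each edge `e` has two
(possibly equal) endpoints `fst e` and `snd e`. -/
structure Multigraph (V E : Type) where
  fst : E → V
  snd : E → V

namespace Multigraph

variable {V E : Type}

/-- `a` and `b` are joined by some edge belonging to the edge set `F`. -/
def edgeRelOn (G : Multigraph V E) (F : Set E) (a b : V) : Prop :=
  ∃ e ∈ F, (G.fst e = a ∧ G.snd e = b) ∨ (G.fst e = b ∧ G.snd e = a)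

/-- Reachability in the spanning subgraph `(V, F)`. -/
def Reach (G : Multigraph V E) (F : Set E) : V → V → Prop :=
  Relation.EqvGen (G.edgeRelOn F)

/-- The setoid on `V` whose classes are the connected components of the
spanning subgraph `(V, F)`. -/
def reachSetoid (G : Multigraph V E) (F : Set E) : Setoid V :=
  Relation.EqvGen.setoid (G.edgeRelOn F)

/-- The number of connected components of the spanning subgraph `(V, F)`. -/
noncomputable def ncomp (G : Multigraph V E) (F : Set E) : ℕ :=
  Nat.card (Quotient (G.reachSetoid F))

/-- The number of connected components of `G`. -/
noncomputable def numComponents (G : Multigraph V E) : ℕ :=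
  G.ncomp Set.univ

/-- `G` is connected. -/
def Connected (G : Multigraph V E) : Prop :=
  G.numComponents = 1

/-- An edge is a bridge if deleting it increases the number of connected components. -/
def IsBridge (G : Multigraph V E) (e : E) : Prop :=
  G.numComponents < G.ncomp {e' | e' ≠ e}

/-- `G` has no bridge. -/
def Bridgeless (G : Multigraph V E) : Prop :=
  ∀ e, ¬ G.IsBridge e

/-- `G` has no loops. -/
def Loopless (G : Multigraph V E) : Prop :=
  ∀ e, G.fst e ≠ G.snd e

/-- Deleting a set `S` of vertices (and all edges meeting `S`). -/
def deleteVerts (G : Multigraph V E) (S : Set V) :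
    Multigraph {v // v ∉ S} {e // G.fst e ∉ S ∧ G.snd e ∉ S} where
  fst := fun e => ⟨G.fst e.1, e.2.1⟩
  snd := fun e => ⟨G.snd e.1, e.2.2⟩

/-- A cut-vertex: a vertex whose deletion increases the number of components. -/
def IsCutVertex (G : Multigraph V E) (x : V) : Prop :=
  G.numComponents < (G.deleteVerts {x}).numComponents

/-- A graph is non-separable if it has at most one vertex and at most one edge, or it is
connected, loopless and has no cut-vertex. -/
def NonSeparable (G : Multigraph V E) : Prop :=
  (Nat.card V ≤ 1 ∧ Nat.card E ≤ 1) ∨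
    (G.Connected ∧ G.Loopless ∧ ∀ x, ¬ G.IsCutVertex x)

/-- The degree of a vertex, counted with edge multiplicity; a loop contributes `2`. -/
noncomputable def degree (G : Multigraph V E) (v : V) : ℕ :=
  Nat.card {e | G.fst e = v} + Nat.card {e | G.snd e = v}

/-- The flow polynomial `F(G,q) = ∑_{E'⊆E} (−1)^{|E|−|E'|} q^{|E'|+c(E')−|V|}`,
where `c(E')` is the number of connected components of the spanning subgraph `(V,E')`. -/
noncomputable def flowPoly (G : Multigraph V E) [Finite V] [Finite E] : Polynomial ℝ :=
  letI : Fintype E := Fintype.ofFinite E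
  ∑ E' : Finset E, (-1 : Polynomial ℝ) ^ (Nat.card E - E'.card) *
    Polynomial.X ^ (E'.card + G.ncomp ↑E' - Nat.card V)

/-- A subgraph of a multigraph: a set of vertices and a set of edges with both
endpoints among those vertices. -/
structure Subgraph (G : Multigraph V E) where
  verts : Set V
  edges : Set E
  fst_mem : ∀ ⦃e⦄, e ∈ edges → G.fst e ∈ verts
  snd_mem : ∀ ⦃e⦄, e ∈ edges → G.snd e ∈ verts

/-- A subgraph, viewed as a multigraph in its own right. -/
def Subgraph.toMultigraph {G : Multigraph V E} (H : G.Subgraph) :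
    Multigraph H.verts H.edges where
  fst := fun e => ⟨G.fst e.1, H.fst_mem e.2⟩
  snd := fun e => ⟨G.snd e.1, H.snd_mem e.2⟩

/-- `H` is a connected component of `G`: its vertex set is the set of vertices reachable
from some vertex, and its edges are all the edges of `G` joining its vertices. -/
def IsComponent {G : Multigraph V E} (H : G.Subgraph) : Prop :=
  (∃ v ∈ H.verts, ∀ u, u ∈ H.verts ↔ G.Reach Set.univ v u) ∧
    ∀ e, e ∈ H.edges ↔ (G.fst e ∈ H.verts ∧ G.snd e ∈ H.verts)

/-- `H` is a block of `G`: a maximal non-separable subgraph. -/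
def IsBlock {G : Multigraph V E} (H : G.Subgraph) : Prop :=
  H.toMultigraph.NonSeparable ∧
    ∀ H' : G.Subgraph, H'.toMultigraph.NonSeparable →
      H.verts ⊆ H'.verts → H.edges ⊆ H'.edges → H' = H

/-- A trivial block: a single vertex and no edges. -/
def Subgraph.IsTrivial {G : Multigraph V E} (H : G.Subgraph) : Prop :=
  (∃ v, H.verts = {v}) ∧ H.edges = ∅

/-- An orientation of a multigraph: each edge is given a tail and a head,
consistent with its two endpoints. -/
structure Orientation (G : Multigraph V E) where
  tail : E → V
  head : E → V
  consistent : ∀ e, (tail e = G.fst e ∧ head e = G.snd e) ∨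
    (tail e = G.snd e ∧ head e = G.fst e)

open Classical in
/-- A `Γ`-flow on an orientation `D`: at every vertex, the sum of the values on
the arcs with that tail equals the sum of the values on the arcs with that head. -/
noncomputable def Orientation.IsFlow {G : Multigraph V E} [Fintype E]
    (D : G.Orientation) {Γ : Type} [AddCommGroup Γ] (φ : E → Γ) : Prop :=
  ∀ v : V, ∑ e ∈ Finset.univ.filter (fun e => D.tail e = v), φ e =
    ∑ e ∈ Finset.univ.filter (fun e => D.head e = v), φ e

/-- Deleting an edge. -/
def deleteEdge (G : Multigraph V E) (e₀ : E) : Multigraph V {e // e ≠ e₀} where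
  fst := fun e => G.fst e.1
  snd := fun e => G.snd e.1

/-- Adding a new edge joining `x` and `y`. -/
def addEdge (G : Multigraph V E) (x y : V) : Multigraph V (E ⊕ Unit) where
  fst := Sum.elim G.fst fun _ => x
  snd := Sum.elim G.snd fun _ => y

/-- Contracting a set `F` of edges: vertices joined through `F` are identified,
and the edges of `F` are removed. -/
def contract (G : Multigraph V E) (F : Set E) :
    Multigraph (Quotient (G.reachSetoid F)) {e // e ∉ F} where
  fst := fun e => Quotient.mk _ (G.fst e.1)
  snd := fun e => Quotient.mk _ (G.snd e.1)

/-- The number of proper colourings of the vertices of `G` with `n` colours. -/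
noncomputable def properColorings (G : Multigraph V E) (n : ℕ) : ℕ :=
  Nat.card {f : V → Fin n // ∀ e, f (G.fst e) ≠ f (G.snd e)}

/-- An isomorphism of multigraphs. -/
structure Iso {V' E' : Type} (G : Multigraph V E) (G' : Multigraph V' E') where
  vmap : V ≃ V'
  emap : E ≃ E'
  ends : ∀ e, (G'.fst (emap e) = vmap (G.fst e) ∧ G'.snd (emap e) = vmap (G.snd e)) ∨
    (G'.fst (emap e) = vmap (G.snd e) ∧ G'.snd (emap e) = vmap (G.fst e))

open Classical in
/-- Subdividing the edge `e₀`: it is replaced by a path of length two through a new vertex. -/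
noncomputable def subdivide (G : Multigraph V E) (e₀ : E) :
    Multigraph (V ⊕ Unit) (E ⊕ Unit) where
  fst := Sum.elim (fun e => Sum.inl (G.fst e)) fun _ => Sum.inr ()
  snd := Sum.elim (fun e => if e = e₀ then Sum.inr () else Sum.inl (G.snd e))
    fun _ => Sum.inl (G.snd e₀)

/-- `G` is a subdivision of `H`. -/
inductive IsSubdivisionOf :
    {V E V' E' : Type} → Multigraph V E → Multigraph V' E' → Prop
  | of_iso {V E V' E'} {G : Multigraph V E} {H : Multigraph V' E'} :
      Iso G H → IsSubdivisionOf G H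
  | step {V E V' E'} {G : Multigraph V E} {H : Multigraph V' E'} (e : E) :
      IsSubdivisionOf G H → IsSubdivisionOf (G.subdivide e) H
  | iso_left {V₁ E₁ V₂ E₂ V' E'} {G₁ : Multigraph V₁ E₁} {G₂ : Multigraph V₂ E₂}
      {H : Multigraph V' E'} :
      Iso G₁ G₂ → IsSubdivisionOf G₂ H → IsSubdivisionOf G₁ H

/-- A multigraph is 3-connected if it has at least 4 vertices and remains connected
after deleting any set of fewer than 3 vertices. -/
def ThreeConnected (G : Multigraph V E) : Prop :=
  4 ≤ Nat.card V ∧ ∀ S : Set V, S.ncard < 3 → (G.deleteVerts S).Connected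

/-- `G` is (isomorphic to) the multigraph `Z_k` with two vertices joined by `k`
parallel edges. -/
def IsZk (G : Multigraph V E) (k : ℕ) : Prop :=
  Nat.card V = 2 ∧ Nat.card E = k ∧ G.Loopless

/-- `G` is essentially 3-connected: a subdivision of a 3-connected graph,
or `Z_k` for some `k ≥ 3`. -/
def EssentiallyThreeConnected (G : Multigraph V E) : Prop :=
  (∃ (V' E' : Type) (H : Multigraph V' E'), H.ThreeConnected ∧ G.IsSubdivisionOf H) ∨
    ∃ k, 3 ≤ k ∧ G.IsZk k

end Multigraph

/-!
A single edge obeys the deletion–contraction rule, and this extends to formulas for the flow values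
of two graphs that share at most one vertex (the product) or two vertices.

By the one-vertex formula it suffices to treat a block that is not a bridge, and there we show by
induction on the number of edges that the flow value has the sign `(-1) ^ (|E| + |V|)`. Let all
degrees be at most `3` except at `u` and `v`, with `u` in the block. If every edge at `u` goes to
`v`, the block consists of parallel edges and its flow value is explicit. Otherwise take an edge
`e = uy` with `y ≠ v`, so that `y` has degree at most `2` after deleting `e`.
* If deleting `e` breaks the block, the block is a ring through `e` of two smaller pieces, and its
  flow value is up to a positive factor the product of theirs.
* If both deleting and contracting `e` leave a block, the signs of the two terms of
  deletion–contraction agree. Contraction keeps the degree condition, because the merged vertex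
  inherits the role of `u`.
* If deleting `e` leaves a block that identifying `y` with `u` breaks, the remaining two edges at
  `y` lie on different sides of this separation, and the two terms add up, in absolute value, to
  `2 - q` times the flow value of the smaller block.
-/

namespace Multigraph

open Finset

variable {V V' E : Type} {R : Type*}

section Basic

lemma ssubset_union_left_of_disjoint {α : Type*} [DecidableEq α] {s t : Finset α}
    (h : Disjoint s t) (ht : t.Nonempty) : s ⊂ s ∪ t :=
  left_lt_sup.2 fun hts => ht.ne_empty (h.symm.eq_bot_of_le hts)

lemma exists_subset_pair_of_ncard_le_two {α : Type*} [Finite α] [Nonempty α] {s : Set α}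
    (h : s.ncard ≤ 2) : ∃ a b, s ⊆ {a, b} := by
  obtain rfl | ⟨a, ha⟩ := s.eq_empty_or_nonempty
  · exact ⟨Classical.arbitrary α, Classical.arbitrary α, Set.empty_subset _⟩
  have hcard : (s \ {a}).ncard ≤ 1 := by
    rw [Set.ncard_sdiff_singleton_of_mem ha]
    omega
  obtain ⟨b, hb⟩ := (Set.ncard_le_one_iff_subset_singleton (Set.toFinite _)).1 hcard
  exact ⟨a, b, Set.sdiff_singleton_subset_iff.1 hb⟩

/-- The edge `e` has ends `x` and `y`, in either order. -/
def Joins (G : Multigraph V E) (e : E) (x y : V) : Prop :=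
  (G.fst e = x ∧ G.snd e = y) ∨ (G.fst e = y ∧ G.snd e = x)

/-- The image of a multigraph under a map of its vertices, with the same edges. -/
def map (G : Multigraph V E) (f : V → V') : Multigraph V' E where
  fst := f ∘ G.fst
  snd := f ∘ G.snd

/-- Identification of the vertex `y` with `x`. The vertex type does not change: `y` survives as
an isolated vertex, which has no effect on nullities. -/
def merge [DecidableEq V] (G : Multigraph V E) (y x : V) : Multigraph V E :=
  G.map (Function.update id y x)

/-- The multigraph in which the ends of the edge `e` are replaced by `x` and `y`. -/
def reattach [DecidableEq E] (G : Multigraph V E) (e : E) (x y : V) : Multigraph V E where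
  fst := Function.update G.fst e x
  snd := Function.update G.snd e y

lemma joins_fst_snd (G : Multigraph V E) (e : E) : G.Joins e (G.fst e) (G.snd e) :=
  Or.inl ⟨rfl, rfl⟩

lemma Joins.symm {G : Multigraph V E} {e : E} {x y : V} (h : G.Joins e x y) : G.Joins e y x :=
  Or.symm h

lemma Joins.fst_eq_snd_iff {G : Multigraph V E} {e : E} {x y : V} (h : G.Joins e x y) :
    G.fst e = G.snd e ↔ x = y := by
  obtain ⟨rfl, rfl⟩ | ⟨rfl, rfl⟩ := h
  · rfl
  · exact eq_comm

lemma Joins.map {G : Multigraph V E} {e : E} {x y : V} (h : G.Joins e x y) (f : V → V') :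
    (G.map f).Joins e (f x) (f y) := by
  obtain ⟨rfl, rfl⟩ | ⟨rfl, rfl⟩ := h
  · exact joins_fst_snd _ _
  · exact (joins_fst_snd _ _).symm

lemma Joins.congr {G G' : Multigraph V E} {e : E} {x y : V} (h' : G'.Joins e x y)
    (h : G.Joins e x y) : G'.Joins e (G.fst e) (G.snd e) := by
  obtain ⟨rfl, rfl⟩ | ⟨rfl, rfl⟩ := h
  · exact h'
  · exact h'.symm

lemma exists_joins {G : Multigraph V E} {e : E} {x : V} (h : G.fst e = x ∨ G.snd e = x) :
    ∃ y, G.Joins e x y := by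
  obtain rfl | rfl := h
  · exact ⟨_, G.joins_fst_snd e⟩
  · exact ⟨_, (G.joins_fst_snd e).symm⟩

lemma exists_joins_notMem {G : Multigraph V E} {e : E} (h : G.fst e ≠ G.snd e) (X : Finset V) :
    (∃ p z, G.Joins e p z ∧ p ≠ z ∧ z ∉ X) ∨ (G.fst e ∈ X ∧ G.snd e ∈ X) := by
  by_cases hs : G.snd e ∈ X
  · by_cases hf : G.fst e ∈ X
    · exact Or.inr ⟨hf, hs⟩
    · exact Or.inl ⟨_, _, (G.joins_fst_snd e).symm, h.symm, hf⟩
  · exact Or.inl ⟨_, _, G.joins_fst_snd e, h, hs⟩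

lemma joins_of_mem_pair [DecidableEq V] {G : Multigraph V E} {e : E} {x y : V}
    (h : G.fst e ≠ G.snd e) (hfst : G.fst e ∈ ({x, y} : Finset V))
    (hsnd : G.snd e ∈ ({x, y} : Finset V)) : G.Joins e x y := by
  rw [mem_insert, mem_singleton] at hfst hsnd
  unfold Joins
  grind

lemma joins_reattach [DecidableEq E] (G : Multigraph V E) (e : E) (x y : V) :
    (G.reattach e x y).Joins e x y := by
  simp [Joins, reattach]

lemma joins_reattach_of_ne [DecidableEq E] {G : Multigraph V E} {e f : E} (hfe : f ≠ e)
    (x y : V) : (G.reattach e x y).Joins f (G.fst f) (G.snd f) := by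
  simp [Joins, reattach, hfe]

lemma merge_merge_comm [DecidableEq V] (G : Multigraph V E) {u y p z : V} (hzu : z ≠ u)
    (hzy : z ≠ y) :
    (G.merge z p).merge y u = (G.merge y u).merge z (Function.update id y u p) := by
  have hcomp : Function.update id y u ∘ Function.update id z p =
      Function.update id z (Function.update id y u p) ∘ Function.update id y u := by
    ext v
    by_cases hvz : v = z <;> by_cases hvy : v = y <;>
      simp_all [Function.update_apply, eq_comm]
  simp only [merge, map, ← Function.comp_assoc, hcomp]

end Basic

section Support

variable [DecidableEq V]

/-- The vertices incident with an edge of `S`. -/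
def support (G : Multigraph V E) (S : Finset E) : Finset V :=
  S.image G.fst ∪ S.image G.snd

variable {G : Multigraph V E} {A B S : Finset E} {e : E} {x y p z u : V}

lemma mem_support : p ∈ G.support S ↔ ∃ e ∈ S, G.fst e = p ∨ G.snd e = p := by
  simp only [support, mem_union, mem_image, and_or_left, exists_or]

lemma nonempty_of_mem_support (hp : p ∈ G.support S) : S.Nonempty :=
  have ⟨e, he, _⟩ := mem_support.1 hp
  ⟨e, he⟩

lemma support_mono (h : A ⊆ B) : G.support A ⊆ G.support B :=
  union_subset_union (image_subset_image h) (image_subset_image h)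

lemma support_map [DecidableEq V'] (G : Multigraph V E) (f : V → V') (S : Finset E) :
    (G.map f).support S = (G.support S).image f := by
  simp only [support, map, image_union, image_image]

lemma Joins.mem_support (h : G.Joins e x y) (he : e ∈ S) : x ∈ G.support S :=
  Multigraph.mem_support.2 ⟨e, he, h.imp And.left And.right⟩

lemma Joins.support_singleton (h : G.Joins e x y) : G.support {e} = {x, y} := by
  obtain ⟨rfl, rfl⟩ | ⟨rfl, rfl⟩ := h
  · rfl
  · exact pair_comm _ _

lemma joins_of_mem_support_singleton (hxy : x ≠ y) (hx : x ∈ G.support {e})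
    (hy : y ∈ G.support {e}) : G.Joins e x y := by
  simp only [mem_support, mem_singleton, exists_eq_left] at hx hy
  unfold Joins
  grind

lemma support_of_forall_joins (hS : S.Nonempty) (h : ∀ e ∈ S, G.Joins e x y) :
    G.support S = {x, y} := by
  obtain ⟨e, he⟩ := hS
  refine Subset.antisymm (fun p hp => ?_) ?_
  · obtain ⟨f, hf, hp⟩ := mem_support.1 hp
    have := h f hf
    simp only [Joins, mem_insert, mem_singleton] at *
    grind
  · exact (h e he).support_singleton ▸ support_mono (singleton_subset_iff.2 he)

lemma support_union [DecidableEq E] : G.support (A ∪ B) = G.support A ∪ G.support B := by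
  simp only [support, image_union, union_union_union_comm]

lemma Joins.support_insert [DecidableEq E] (h : G.Joins e x y) :
    G.support (insert e S) = {x, y} ∪ G.support S := by
  rw [insert_eq, support_union, h.support_singleton]

lemma support_reattach [DecidableEq E] (he : e ∉ S) (x y : V) :
    (G.reattach e x y).support S = G.support S := by
  have hne : ∀ f ∈ S, f ≠ e := fun f hf => ne_of_mem_of_not_mem hf he
  exact congrArg₂ (· ∪ ·) (image_congr fun f hf => Function.update_of_ne (hne f hf) _ _)
    (image_congr fun f hf => Function.update_of_ne (hne f hf) _ _)

lemma merge_fst_snd_of_notMem_support (hy : y ∉ G.support S) (he : e ∈ S) :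
    (G.merge y x).fst e = G.fst e ∧ (G.merge y x).snd e = G.snd e := by
  have hne : G.fst e ≠ y ∧ G.snd e ≠ y :=
    ⟨fun h => hy (mem_support.2 ⟨e, he, Or.inl h⟩), fun h => hy (mem_support.2 ⟨e, he, Or.inr h⟩)⟩
  exact ⟨Function.update_of_ne hne.1 _ _, Function.update_of_ne hne.2 _ _⟩

lemma support_merge_of_notMem (hy : y ∉ G.support S) :
    (G.merge y x).support S = G.support S := by
  exact congrArg₂ (· ∪ ·)
    (image_congr fun e he => (merge_fst_snd_of_notMem_support hy he).1)
    (image_congr fun e he => (merge_fst_snd_of_notMem_support hy he).2)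

lemma support_merge_of_mem (hxy : x ≠ y) (hx : x ∈ G.support S) :
    (G.merge y x).support S = (G.support S).erase y := by
  ext p
  simp only [merge, support_map, mem_image, mem_erase, Function.update_apply, id]
  grind

lemma support_merge_inter_subset [DecidableEq E] (h : G.Joins e p z) (hz : z ∉ G.support A) :
    (G.merge z p).support A ∩ (G.merge z p).support B ⊆
      G.support A ∩ G.support (insert e B) := by
  rw [support_merge_of_notMem hz, h.support_insert, merge, support_map]
  intro r
  simp only [mem_inter, mem_image, mem_union, mem_insert, mem_singleton, Function.update_apply, id]
  grind

lemma support_merge_inter_subset_singleton (h : G.support A ∩ G.support B ⊆ {u, y}) :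
    (G.merge y u).support A ∩ (G.merge y u).support B ⊆ {u} := by
  simp only [subset_iff, mem_inter, mem_insert, mem_singleton] at h
  simp only [subset_iff, merge, support_map, mem_inter, mem_image, mem_singleton,
    Function.update_apply, id]
  grind

lemma notMem_support_merge (hzu : z ≠ u) (hz : z ∉ G.support S) :
    z ∉ (G.merge y u).support S := by
  rw [merge, support_map]
  simp only [mem_image, Function.update_apply, id]
  grind

end Support

section Degree

variable [DecidableEq V]

/-- The degree of `p` in the spanning subgraph with edge set `S`; a loop contributes `2`. -/
def degreeIn (G : Multigraph V E) (S : Finset E) (p : V) : ℕ :=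
  #{e ∈ S | G.fst e = p} + #{e ∈ S | G.snd e = p}

variable {G : Multigraph V E} {A B S : Finset E} {e : E} {x y p : V}

lemma degreeIn_univ [Fintype E] (G : Multigraph V E) (p : V) :
    G.degreeIn univ p = G.degree p := by
  simp [degreeIn, degree, Nat.card_eq_fintype_card, Fintype.card_subtype]

lemma degreeIn_pos_iff : 0 < G.degreeIn S p ↔ p ∈ G.support S := by
  simp only [degreeIn, add_pos_iff, card_pos, filter_nonempty_iff, mem_support, and_or_left,
    exists_or]

lemma degreeIn_mono (h : A ⊆ B) (p : V) : G.degreeIn A p ≤ G.degreeIn B p := by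
  unfold degreeIn
  gcongr

lemma degreeIn_union [DecidableEq E] (h : Disjoint A B) (p : V) :
    G.degreeIn (A ∪ B) p = G.degreeIn A p + G.degreeIn B p := by
  simp only [degreeIn, filter_union, card_union_of_disjoint (disjoint_filter_filter h)]
  exact add_add_add_comm _ _ _ _

lemma degreeIn_insert [DecidableEq E] (he : e ∉ S) (h : G.Joins e x y) (p : V) :
    G.degreeIn (insert e S) p =
      G.degreeIn S p + ((if x = p then 1 else 0) + if y = p then 1 else 0) := by
  have hcard : ∀ f : E → V, #{e' ∈ insert e S | f e' = p} =
      #{e' ∈ S | f e' = p} + if f e = p then 1 else 0 := by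
    intro f
    rw [filter_insert]
    split_ifs
    · exact card_insert_of_notMem fun h => he (mem_filter.1 h).1
    · rfl
  simp only [degreeIn, hcard]
  obtain ⟨rfl, rfl⟩ | ⟨rfl, rfl⟩ := h <;> omega

lemma degreeIn_reattach [DecidableEq E] (he : e ∉ S) (x y p : V) :
    (G.reattach e x y).degreeIn S p = G.degreeIn S p := by
  have hne : ∀ f ∈ S, f ≠ e := fun f hf => ne_of_mem_of_not_mem hf he
  unfold degreeIn
  congr 2 <;> refine filter_congr fun f hf => ?_ <;> simp [reattach, hne f hf]

lemma degreeIn_merge_le (h : p ≠ x) : (G.merge y x).degreeIn S p ≤ G.degreeIn S p := by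
  have himp : ∀ v, Function.update id y x v = p → v = p := by
    intro v
    rw [Function.update_apply]
    split_ifs
    · exact fun hxp => absurd hxp.symm h
    · exact id
  exact add_le_add (card_le_card (monotone_filter_right S fun _ _ => himp _))
    (card_le_card (monotone_filter_right S fun _ _ => himp _))

end Degree

section Nullity

variable {G : Multigraph V E}

lemma reachSetoid_le_iff {F : Set E} {s : Setoid V} :
    G.reachSetoid F ≤ s ↔ ∀ e ∈ F, s (G.fst e) (G.snd e) := by
  refine ⟨fun h e he => h (Relation.EqvGen.rel _ _ ⟨e, he, G.joins_fst_snd e⟩), fun h =>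
    Setoid.eqvGen_le ?_⟩
  rintro a b ⟨e, he, ⟨rfl, rfl⟩ | ⟨rfl, rfl⟩⟩
  · exact h e he
  · exact s.symm (h e he)

lemma reachSetoid_fst_snd {F : Set E} {e : E} (he : e ∈ F) :
    G.reachSetoid F (G.fst e) (G.snd e) :=
  reachSetoid_le_iff.1 le_rfl e he

lemma reachSetoid_mono {F F' : Set E} (h : F ⊆ F') : G.reachSetoid F ≤ G.reachSetoid F' :=
  reachSetoid_le_iff.2 fun _ he => reachSetoid_fst_snd (h he)

lemma Joins.reachSetoid {F : Set E} {e : E} {x y : V} (h : G.Joins e x y) (he : e ∈ F) :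
    G.reachSetoid F x y := by
  obtain ⟨rfl, rfl⟩ | ⟨rfl, rfl⟩ := h
  · exact reachSetoid_fst_snd he
  · exact Setoid.symm' _ (reachSetoid_fst_snd he)

lemma reachSetoid_empty : G.reachSetoid ∅ = ⊥ :=
  le_bot_iff.1 (reachSetoid_le_iff.2 fun _ he => he.elim)

lemma reachSetoid_congr {G' : Multigraph V E} {F : Set E}
    (h : ∀ e ∈ F, G'.Joins e (G.fst e) (G.snd e)) : G'.reachSetoid F = G.reachSetoid F := by
  refine le_antisymm (reachSetoid_le_iff.2 fun e he => ?_)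
    (reachSetoid_le_iff.2 fun e he => (h e he).reachSetoid he)
  obtain ⟨h₁, h₂⟩ | ⟨h₁, h₂⟩ := h e he
  · exact h₁ ▸ h₂ ▸ reachSetoid_fst_snd he
  · exact h₁ ▸ h₂ ▸ Setoid.symm' _ (reachSetoid_fst_snd he)

lemma reachSetoid_insert_of_loop {F : Set E} {e : E} (h : G.fst e = G.snd e) :
    G.reachSetoid (insert e F) = G.reachSetoid F := by
  refine le_antisymm (reachSetoid_le_iff.2 ?_) (reachSetoid_mono (Set.subset_insert e F))
  rintro f (rfl | hf)
  · exact h ▸ Setoid.refl' _ _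
  · exact reachSetoid_fst_snd hf

lemma reachSetoid_insert [DecidableEq V] {F : Set E} {e : E} {x y : V} (h : G.Joins e x y) :
    G.reachSetoid (insert e F) =
      Setoid.comap (Function.update id y x) ((G.merge y x).reachSetoid F) := by
  have hfix : ∀ p, G.reachSetoid (insert e F) (Function.update id y x p) p := by
    intro p
    rw [Function.update_apply]
    split_ifs with hp
    · exact hp ▸ h.reachSetoid (Set.mem_insert e F)
    · exact Setoid.refl' _ _
  have hmerge : (G.merge y x).reachSetoid F ≤ G.reachSetoid (insert e F) :=
    reachSetoid_le_iff.2 fun f hf => Setoid.trans' _ (hfix _) <| Setoid.trans' _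
      (reachSetoid_fst_snd (Set.mem_insert_of_mem e hf)) (Setoid.symm' _ (hfix _))
  refine le_antisymm (reachSetoid_le_iff.2 ?_) fun a b hab =>
    Setoid.trans' _ (Setoid.symm' _ (hfix a)) (Setoid.trans' _ (hmerge hab) (hfix b))
  rintro f (rfl | hf)
  · have heq : Function.update id y x (G.fst f) = Function.update id y x (G.snd f) := by
      simp only [Function.update_apply, id]
      grind [Joins]
    rw [Setoid.comap_rel, heq]
  · exact reachSetoid_fst_snd hf

lemma ncomp_empty : G.ncomp ∅ = Nat.card V := by
  rw [ncomp, reachSetoid_empty]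
  exact Nat.card_congr Setoid.quotientBotEquiv

lemma ncomp_lt_ncomp_of_not_reach [Finite V] {F F' : Set E} {x y : V} (hF : F ⊆ F')
    (hxy : G.Reach F' x y) (h : ¬ G.Reach F x y) : G.ncomp F' < G.ncomp F := by
  let π : Quotient (G.reachSetoid F) → Quotient (G.reachSetoid F') :=
    Quotient.map' id (reachSetoid_mono hF)
  have hsurj : Function.Surjective π := Quotient.ind fun p => ⟨Quotient.mk _ p, rfl⟩
  refine (Nat.card_le_card_of_surjective π hsurj).lt_of_ne fun hcard => h ?_
  have hbij := (Nat.bijective_iff_surjective_and_card π).2 ⟨hsurj, hcard.symm⟩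
  exact Quotient.exact (hbij.1 (Quotient.sound hxy : π (Quotient.mk _ x) = π (Quotient.mk _ y)))

lemma ncomp_merge [DecidableEq V] [Finite V] {F : Set E} {e : E} {x y : V} (h : G.Joins e x y)
    (hxy : x ≠ y) : (G.merge y x).ncomp F = G.ncomp (insert e F) + 1 := by
  let s := (G.merge y x).reachSetoid F
  let ρ : V → V := Function.update id y x
  have hρ : ∀ p, ρ p ≠ y := by
    intro p
    simp only [ρ, Function.update_apply, id]
    grind
  have hisolated : s ≤ Setoid.ker (· = y) :=
    reachSetoid_le_iff.2 fun f _ => propext (iff_of_false (hρ _) (hρ _))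
  have hrange : Set.range (Quotient.mk s ∘ ρ) = {Quotient.mk s y}ᶜ := by
    ext c
    obtain ⟨p, rfl⟩ := c.exists_rep
    refine ⟨?_, fun hp => ⟨p, ?_⟩⟩
    · rintro ⟨r, hr⟩ hp
      have hker : (ρ r = y) = (y = y) := hisolated (Quotient.exact (hr.trans hp))
      exact hρ r (hker.mpr rfl)
    · have hpy : p ≠ y := fun h => hp (congrArg _ h)
      exact congrArg _ (Function.update_of_ne hpy _ _)
  have hcard : G.ncomp (insert e F) = ({Quotient.mk s y}ᶜ : Set _).ncard := by
    rw [ncomp, reachSetoid_insert h, ← hrange]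
    exact Nat.card_congr (Setoid.comapQuotientEquiv ρ s)
  rw [hcard, ← Set.ncard_singleton (Quotient.mk s y), add_comm, Set.ncard_add_ncard_compl]
  rfl

lemma card_le_card_add_ncomp [Finite V] (G : Multigraph V E) (T : Finset E) :
    Nat.card V ≤ #T + G.ncomp T := by
  classical
  induction T using Finset.induction_on generalizing G with
  | empty => simp [ncomp_empty]
  | insert e T he ih =>
    rw [card_insert_of_notMem he, coe_insert]
    by_cases h : G.fst e = G.snd e
    · have := ih G
      rw [ncomp, reachSetoid_insert_of_loop h, ← ncomp]
      omega
    · have := ncomp_merge (F := T) (G.joins_fst_snd e) h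
      have := ih (G.merge (G.snd e) (G.fst e))
      omega

/-- The nullity (cyclomatic number) `|T| + c(T) - |V|` of the spanning subgraph with edge set `T`.
For finite `V` the subtraction does not truncate, by `card_le_card_add_ncomp`. -/
noncomputable def nullity (G : Multigraph V E) (T : Finset E) : ℕ :=
  #T + G.ncomp T - Nat.card V

lemma nullity_empty : G.nullity ∅ = 0 := by
  simp [nullity, ncomp_empty]

lemma nullity_congr {G' : Multigraph V E} {T : Finset E}
    (h : ∀ e ∈ T, G'.Joins e (G.fst e) (G.snd e)) : G'.nullity T = G.nullity T := by
  simp only [nullity, ncomp, reachSetoid_congr h]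

variable [Finite V] [DecidableEq E] {T : Finset E} {e : E}

lemma nullity_insert_of_loop (he : e ∉ T) (h : G.fst e = G.snd e) :
    G.nullity (insert e T) = G.nullity T + 1 := by
  have := G.card_le_card_add_ncomp T
  rw [nullity, card_insert_of_notMem he, coe_insert, ncomp, reachSetoid_insert_of_loop h, ← ncomp,
    nullity]
  omega

lemma nullity_insert [DecidableEq V] {x y : V} (he : e ∉ T) (h : G.Joins e x y) (hxy : x ≠ y) :
    G.nullity (insert e T) = (G.merge y x).nullity T := by
  have := ncomp_merge (F := T) h hxy
  rw [nullity, card_insert_of_notMem he, coe_insert, nullity]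
  omega

end Nullity

section FlowValue

variable [CommRing R]

/-- The value at `q` of the flow polynomial of the spanning subgraph with edge set `S`. Varying `S`
instead of the graph keeps the edge type fixed along deletions and contractions. -/
noncomputable def flowValue (G : Multigraph V E) (q : R) (S : Finset E) : R :=
  ∑ T ∈ S.powerset, (-1) ^ (#S - #T) * q ^ G.nullity T

lemma eval_flowPoly [Finite V] [Fintype E] (G : Multigraph V E) (q : ℝ) :
    G.flowPoly.eval q = G.flowValue q univ := by
  simp only [flowPoly, flowValue, nullity, Polynomial.eval_finsetSum, powerset_univ, card_univ,
    Nat.card_eq_fintype_card]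
  refine sum_congr (by congr!) fun T _ => ?_
  simp

variable {G : Multigraph V E} {q : R} {A B S : Finset E} {e : E} {x y w u v : V}

lemma flowValue_empty : G.flowValue q ∅ = 1 := by
  simp [flowValue, nullity_empty]

lemma flowValue_congr {G' : Multigraph V E} (h : ∀ e ∈ S, G'.Joins e (G.fst e) (G.snd e)) :
    G'.flowValue q S = G.flowValue q S :=
  sum_congr rfl fun _ hT => by rw [nullity_congr fun e he => h e (mem_powerset.1 hT he)]

lemma flowValue_merge_of_notMem [DecidableEq V] (hy : y ∉ G.support S) :
    (G.merge y x).flowValue q S = G.flowValue q S :=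
  flowValue_congr fun _ he => Or.inl (merge_fst_snd_of_notMem_support hy he)

lemma flowValue_merge_merge_of_notMem [DecidableEq V] {z p : V} (hzu : z ≠ u) (hzy : z ≠ y)
    (hz : z ∉ G.support A) :
    ((G.merge z p).merge y u).flowValue q A = (G.merge y u).flowValue q A := by
  rw [merge_merge_comm G hzu hzy, flowValue_merge_of_notMem (notMem_support_merge hzu hz)]

variable [DecidableEq E]

lemma flowValue_reattach_of_notMem (he : e ∉ S) :
    (G.reattach e x y).flowValue q S = G.flowValue q S :=
  flowValue_congr fun _ hf => joins_reattach_of_ne (ne_of_mem_of_not_mem hf he) x y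

lemma flowValue_insert_eq_sum_sub (he : e ∉ S) :
    G.flowValue q (insert e S) =
      ∑ T ∈ S.powerset, (-1) ^ (#S - #T) * q ^ G.nullity (insert e T) - G.flowValue q S := by
  rw [flowValue, sum_powerset_insert he, add_comm, sub_eq_add_neg, flowValue, ← sum_neg_distrib]
  refine congrArg₂ (· + ·) (sum_congr rfl fun T hT => ?_) (sum_congr rfl fun T hT => ?_)
  · rw [card_insert_of_notMem he, card_insert_of_notMem fun h => he (mem_powerset.1 hT h),
      Nat.add_sub_add_right]
  · rw [card_insert_of_notMem he, Nat.succ_sub (card_le_card (mem_powerset.1 hT)), pow_succ]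
    ring

variable [Finite V]

lemma flowValue_insert_of_loop (he : e ∉ S) (h : G.fst e = G.snd e) :
    G.flowValue q (insert e S) = (q - 1) * G.flowValue q S := by
  have hsum : ∑ T ∈ S.powerset, (-1) ^ (#S - #T) * q ^ G.nullity (insert e T) =
      q * G.flowValue q S := by
    rw [flowValue, mul_sum]
    refine sum_congr rfl fun T hT => ?_
    rw [nullity_insert_of_loop (fun h => he (mem_powerset.1 hT h)) h, pow_succ]
    ring
  rw [flowValue_insert_eq_sum_sub he, hsum, sub_one_mul]

omit [DecidableEq E] in
lemma flowValue_of_forall_loop (h : ∀ e ∈ S, G.fst e = G.snd e) :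
    G.flowValue q S = (q - 1) ^ #S := by
  classical
  induction S using Finset.induction_on with
  | empty => simp [flowValue_empty]
  | insert e S he ih =>
    rw [forall_mem_insert] at h
    rw [flowValue_insert_of_loop he h.1, ih h.2, card_insert_of_notMem he, pow_succ']

variable [DecidableEq V]

lemma flowValue_insert (he : e ∉ S) (h : G.Joins e x y) (hxy : x ≠ y) :
    G.flowValue q (insert e S) = (G.merge y x).flowValue q S - G.flowValue q S := by
  rw [flowValue_insert_eq_sum_sub he]
  refine congrArg (· - _) (sum_congr rfl fun T hT => ?_)
  rw [nullity_insert (fun h => he (mem_powerset.1 hT h)) h hxy]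

lemma flowValue_insert_eq_zero (he : e ∉ S) (h : G.Joins e x y) (hxy : x ≠ y)
    (hy : y ∉ G.support S) : G.flowValue q (insert e S) = 0 := by
  rw [flowValue_insert he h hxy, flowValue_merge_of_notMem hy, sub_self]

omit [DecidableEq E] in
lemma flowValue_eq_zero_of_degreeIn_eq_one (h : G.degreeIn S y = 1) : G.flowValue q S = 0 := by
  classical
  obtain ⟨e, he, hy⟩ := mem_support.1 (degreeIn_pos_iff.1 (h ▸ one_pos))
  obtain ⟨x, hyx⟩ := exists_joins hy
  rw [← insert_erase he, degreeIn_insert (notMem_erase e S) hyx, if_pos rfl] at h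
  have hxy : x ≠ y := fun hxy => by simp [hxy] at h
  have hpos : ¬ 0 < G.degreeIn (S.erase e) y := by omega
  rw [← insert_erase he, flowValue_insert_eq_zero (notMem_erase e S) hyx.symm hxy
    (mt degreeIn_pos_iff.2 hpos)]

omit [DecidableEq E] [DecidableEq V] in
lemma mul_flowValue_of_forall_joins (huv : u ≠ v) (h : ∀ e ∈ S, G.Joins e u v) :
    q * G.flowValue q S = (q - 1) ^ #S + (-1) ^ #S * (q - 1) := by
  classical
  induction S using Finset.induction_on with
  | empty => simp [flowValue_empty]
  | insert e S he ih =>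
    rw [forall_mem_insert] at h
    have hloop : ∀ f ∈ S, (G.merge v u).fst f = (G.merge v u).snd f := fun f hf =>
      ((h.2 f hf).map _).fst_eq_snd_iff.2 (by simp [huv])
    rw [flowValue_insert he h.1 huv, flowValue_of_forall_loop hloop, card_insert_of_notMem he]
    linear_combination -(ih h.2)

lemma flowValue_union (hAB : Disjoint A B) (h : G.support A ∩ G.support B ⊆ {w}) :
    G.flowValue q (A ∪ B) = G.flowValue q A * G.flowValue q B := by
  induction B using Finset.induction_on generalizing G with
  | empty => simp [flowValue_empty]
  | insert f B hf ih =>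
    obtain ⟨hfA, hAB⟩ := disjoint_insert_right.1 hAB
    have hfAB : f ∉ A ∪ B := by simp [hfA, hf]
    have hB : G.support A ∩ G.support B ⊆ {w} :=
      (inter_subset_inter_left (support_mono (subset_insert f B))).trans h
    rw [union_insert]
    by_cases hloop : G.fst f = G.snd f
    · rw [flowValue_insert_of_loop hfAB hloop, flowValue_insert_of_loop hf hloop, ih hAB hB]
      ring
    obtain ⟨p, z, hpz, hne, hz⟩ | ⟨hfst, hsnd⟩ := exists_joins_notMem hloop (G.support A)
    · rw [flowValue_insert hfAB hpz hne, flowValue_insert hf hpz hne, ih hAB hB,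
        ih hAB ((support_merge_inter_subset hpz hz).trans h), flowValue_merge_of_notMem hz]
      ring
    · have hends : ∀ p ∈ G.support A, p ∈ G.support (insert f B) → p = w := fun p hA hB =>
        mem_singleton.1 (h (mem_inter.2 ⟨hA, hB⟩))
      have hjoins := G.joins_fst_snd f
      have hmem := mem_insert_self f B
      exact absurd ((hends _ hfst (hjoins.mem_support hmem)).trans
        (hends _ hsnd (hjoins.symm.mem_support hmem)).symm) hloop

lemma flowValue_merge_union (hAB : Disjoint A B) (h : G.support A ∩ G.support B ⊆ {u, y}) :
    (G.merge y u).flowValue q (A ∪ B) =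
      (G.merge y u).flowValue q A * (G.merge y u).flowValue q B :=
  flowValue_union hAB (support_merge_inter_subset_singleton h)

lemma flowValue_merge_insert {f : E} {z p : V} (hf : f ∉ S) (hpz : G.Joins f p z) (hne : p ≠ z)
    (hzu : z ≠ u) (hzy : z ≠ y) :
    (G.merge y u).flowValue q (insert f S) =
      ((G.merge z p).merge y u).flowValue q S - (G.merge y u).flowValue q S := by
  have hjoins := hpz.map (Function.update id y u)
  rw [Function.update_of_ne hzy] at hjoins
  have hne' : Function.update id y u p ≠ z := by
    rw [Function.update_apply]
    split_ifs
    · exact hzu.symm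
    · exact hne
  rw [merge_merge_comm G hzu hzy]
  exact flowValue_insert hf hjoins hne'

/-- Both sides satisfy deletion–contraction in the edges of `B`, which reduces the claim to a loop
or an edge joining `u` to `y`. -/
lemma mul_flowValue_union (huy : u ≠ y) (hAB : Disjoint A B)
    (h : G.support A ∩ G.support B ⊆ {u, y}) :
    (q - 1) * G.flowValue q (A ∪ B) = (q - 1) * (G.flowValue q A * G.flowValue q B) +
      ((G.merge y u).flowValue q A - G.flowValue q A) *
        ((G.merge y u).flowValue q B - G.flowValue q B) := by
  induction B using Finset.induction_on generalizing G with
  | empty => simp [flowValue_empty]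
  | insert f B hf ih =>
    obtain ⟨hfA, hAB⟩ := disjoint_insert_right.1 hAB
    have hfAB : f ∉ A ∪ B := by simp [hfA, hf]
    have hB : G.support A ∩ G.support B ⊆ {u, y} :=
      (inter_subset_inter_left (support_mono (subset_insert f B))).trans h
    have hpair : ∀ p ∈ G.support A ∪ {u, y}, p ∈ G.support (insert f B) →
        p ∈ ({u, y} : Finset V) := fun p hp hpB =>
      (mem_union.1 hp).elim (fun hpA => h (mem_inter.2 ⟨hpA, hpB⟩)) id
    have ihB := ih hAB hB
    rw [union_insert]
    by_cases hloop : G.fst f = G.snd f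
    · have hloop' : (G.merge y u).fst f = (G.merge y u).snd f :=
        congrArg (Function.update id y u) hloop
      rw [flowValue_insert_of_loop hfAB hloop, flowValue_insert_of_loop hf hloop,
        flowValue_insert_of_loop hf hloop']
      linear_combination (q - 1) * ihB
    obtain ⟨p, z, hpz, hne, hz⟩ | hends := exists_joins_notMem hloop (G.support A ∪ {u, y})
    · simp only [mem_union, mem_insert, mem_singleton, not_or] at hz
      obtain ⟨hzA, hzu, hzy⟩ := hz
      have ihM := ih hAB ((support_merge_inter_subset hpz hzA).trans h)
      rw [flowValue_merge_merge_of_notMem hzu hzy hzA, flowValue_merge_of_notMem hzA] at ihM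
      rw [flowValue_insert hfAB hpz hne, flowValue_insert hf hpz hne,
        flowValue_merge_insert hf hpz hne hzu hzy]
      linear_combination ihM - ihB
    · have hjoins : G.Joins f u y := joins_of_mem_pair hloop
        (hpair _ hends.1 ((G.joins_fst_snd f).mem_support (mem_insert_self f B)))
        (hpair _ hends.2 ((G.joins_fst_snd f).symm.mem_support (mem_insert_self f B)))
      have hloop' : (G.merge y u).fst f = (G.merge y u).snd f :=
        (hjoins.map _).fst_eq_snd_iff.2 (by simp [huy])
      rw [flowValue_insert hfAB hjoins huy, flowValue_insert hf hjoins huy,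
        flowValue_insert_of_loop hf hloop', flowValue_merge_union hAB hB]
      linear_combination -ihB

lemma mul_flowValue_union_of_degreeIn_eq_one (huy : u ≠ y) (hAB : Disjoint A B)
    (h : G.support A ∩ G.support B ⊆ {u, y}) (hA : G.degreeIn A y = 1) (hB : G.degreeIn B y = 1) :
    (q - 1) * G.flowValue q (A ∪ B) = (G.merge y u).flowValue q (A ∪ B) := by
  rw [mul_flowValue_union huy hAB h, flowValue_merge_union hAB h,
    flowValue_eq_zero_of_degreeIn_eq_one hA, flowValue_eq_zero_of_degreeIn_eq_one hB]
  ring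

end FlowValue

section Ring

variable [DecidableEq V]

/-- The edges `insert e (A ∪ B)` form a ring of three pieces: `A` and `B` share exactly the vertex
`w`, and `e` joins a vertex `x` lying only on `A` to a vertex `y` lying only on `B`. -/
structure IsRing (G : Multigraph V E) (e : E) (A B : Finset E) (x y w : V) : Prop where
  notMem_left : e ∉ A
  notMem_right : e ∉ B
  disjoint : Disjoint A B
  joins : G.Joins e x y
  support_inter : G.support A ∩ G.support B = {w}
  x_mem : x ∈ G.support A
  x_notMem : x ∉ G.support B
  y_mem : y ∈ G.support B
  y_notMem : y ∉ G.support A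

namespace IsRing

variable {G : Multigraph V E} {e : E} {A B : Finset E} {x y w : V}

lemma symm (h : G.IsRing e A B x y w) : G.IsRing e B A y x w where
  notMem_left := h.notMem_right
  notMem_right := h.notMem_left
  disjoint := h.disjoint.symm
  joins := h.joins.symm
  support_inter := (inter_comm _ _).trans h.support_inter
  x_mem := h.y_mem
  x_notMem := h.y_notMem
  y_mem := h.x_mem
  y_notMem := h.x_notMem

lemma mem_inter (h : G.IsRing e A B x y w) : w ∈ G.support A ∧ w ∈ G.support B :=
  Finset.mem_inter.1 (h.support_inter ▸ mem_singleton_self w)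

lemma ne (h : G.IsRing e A B x y w) : x ≠ y :=
  ne_of_mem_of_not_mem h.x_mem h.y_notMem

variable [DecidableEq E]

lemma notMem_union (h : G.IsRing e A B x y w) : e ∉ A ∪ B := by
  simp [h.notMem_left, h.notMem_right]

lemma left_ssubset (h : G.IsRing e A B x y w) : insert e A ⊂ insert e (A ∪ B) := by
  rw [← insert_union]
  exact ssubset_union_left_of_disjoint (disjoint_insert_left.2 ⟨h.notMem_right, h.disjoint⟩)
    (nonempty_of_mem_support h.y_mem)

lemma card_support (h : G.IsRing e A B x y w) :
    #(G.support (insert e (A ∪ B))) + 1 = #(G.support A) + #(G.support B) := by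
  have hends : {x, y} ⊆ G.support A ∪ G.support B := by
    simp [insert_subset_iff, h.x_mem, h.y_mem]
  rw [h.joins.support_insert, support_union, union_eq_right.2 hends, ← card_union_add_card_inter,
    h.support_inter, card_singleton]

lemma support_left (h : G.IsRing e A B x y w) :
    (G.reattach e x w).support (insert e A) = G.support A := by
  rw [(joins_reattach G e x w).support_insert, support_reattach h.notMem_left, union_eq_right]
  simp [insert_subset_iff, h.x_mem, h.mem_inter.1]

lemma degreeIn_left_le (h : G.IsRing e A B x y w) (p : V) :
    (G.reattach e x w).degreeIn (insert e A) p ≤ G.degreeIn (insert e (A ∪ B)) p := by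
  have hw : 0 < G.degreeIn B w := degreeIn_pos_iff.2 h.mem_inter.2
  rw [degreeIn_insert h.notMem_left (joins_reattach G e x w), degreeIn_reattach h.notMem_left,
    degreeIn_insert h.notMem_union h.joins, degreeIn_union h.disjoint]
  split_ifs <;> subst_vars <;> omega

lemma mul_flowValue [CommRing R] [Finite V] (h : G.IsRing e A B x y w) (q : R) :
    (q - 1) * G.flowValue q (insert e (A ∪ B)) =
      (G.reattach e x w).flowValue q (insert e A) *
        (G.reattach e y w).flowValue q (insert e B) := by
  have hwy : w ≠ y := ne_of_mem_of_not_mem h.mem_inter.1 h.y_notMem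
  have hshared : G.support (insert e A) ∩ G.support B ⊆ {w, y} := by
    rw [h.joins.support_insert, union_inter_distrib_right, h.support_inter,
      insert_inter_of_notMem h.x_notMem]
    exact union_subset (inter_subset_left.trans (subset_insert _ _))
      (singleton_subset_iff.2 (mem_insert_self _ _))
  have hleaf : G.flowValue q (insert e A) = 0 :=
    flowValue_insert_eq_zero h.notMem_left h.joins h.ne h.y_notMem
  have hleft : (G.merge y w).flowValue q (insert e A) =
      (G.reattach e x w).flowValue q (insert e A) := by
    have hmerge : (G.merge y w).Joins e x w := by
      simpa [h.ne, merge] using h.joins.map (Function.update id y w)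
    refine (flowValue_congr ((forall_mem_insert _ _ _).2
      ⟨(joins_reattach G e x w).congr hmerge, fun f hf => ?_⟩)).symm
    obtain ⟨hfst, hsnd⟩ := merge_fst_snd_of_notMem_support (x := w) h.y_notMem hf
    rw [hfst, hsnd]
    exact joins_reattach_of_ne (ne_of_mem_of_not_mem hf h.notMem_left) x w
  have hright : (G.reattach e y w).flowValue q (insert e B) =
      (G.merge y w).flowValue q B - G.flowValue q B := by
    have hmerge : ((G.reattach e y w).merge y w).flowValue q B = (G.merge y w).flowValue q B :=
      flowValue_congr fun f hf =>
        (joins_reattach_of_ne (ne_of_mem_of_not_mem hf h.notMem_right) y w).map _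
    rw [flowValue_insert h.notMem_right (joins_reattach G e y w).symm hwy, hmerge,
      flowValue_reattach_of_notMem h.notMem_right]
  rw [← insert_union, mul_flowValue_union hwy
    (disjoint_insert_left.2 ⟨h.notMem_right, h.disjoint⟩) hshared, hleaf, hleft, hright]
  ring

end IsRing

end Ring

section SignedFlow

/-- The flow value with the sign that makes it positive on bridgeless blocks. -/
noncomputable def signedFlow [DecidableEq V] [CommRing R] (G : Multigraph V E) (q : R)
    (S : Finset E) : R :=
  (-1) ^ (#S + #(G.support S)) * G.flowValue q S

variable [CommRing R] [DecidableEq V] {G : Multigraph V E} {q : R} {A B S : Finset E} {e : E}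
  {x y w u v : V}

lemma signedFlow_merge (hxy : x ≠ y) (hx : x ∈ G.support S) (hy : y ∈ G.support S) :
    (G.merge y x).signedFlow q S =
      -((-1) ^ (#S + #(G.support S)) * (G.merge y x).flowValue q S) := by
  rw [signedFlow, support_merge_of_mem hxy hx, ← card_erase_add_one hy, ← add_assoc, pow_succ]
  ring

variable [Finite V]

lemma signedFlow_singleton_of_loop (h : G.fst e = G.snd e) : G.signedFlow q {e} = q - 1 := by
  rw [signedFlow, (G.joins_fst_snd e).support_singleton, h, flowValue_of_forall_loop (by simp [h])]
  simp

lemma signedFlow_singleton_of_ne (h : G.fst e ≠ G.snd e) : G.signedFlow q {e} = 0 := by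
  classical
  have hzero : G.flowValue q (insert e ∅) = 0 :=
    flowValue_insert_eq_zero (notMem_empty e) (G.joins_fst_snd e) h (notMem_empty _)
  rw [signedFlow, ← insert_empty_eq, hzero, mul_zero]

lemma mul_signedFlow_of_forall_joins (huv : u ≠ v) (hS : S.Nonempty)
    (h : ∀ e ∈ S, G.Joins e u v) : q * G.signedFlow q S = (q - 1) + (1 - q) ^ #S := by
  have hsign : (-1 : R) ^ #S * (-1) ^ #S = 1 := by rw [← mul_pow]; simp
  rw [signedFlow, support_of_forall_joins hS h, card_pair huv, mul_left_comm,
    mul_flowValue_of_forall_joins huv h, ← neg_sub q 1, neg_pow (q - 1), pow_add,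
    even_two.neg_one_pow]
  linear_combination (q - 1) * hsign

variable [DecidableEq E]

lemma IsRing.mul_signedFlow (h : G.IsRing e A B x y w) (q : R) :
    (q - 1) * G.signedFlow q (insert e (A ∪ B)) =
      (G.reattach e x w).signedFlow q (insert e A) *
        (G.reattach e y w).signedFlow q (insert e B) := by
  have hedges : #(insert e A) + #(insert e B) = #(insert e (A ∪ B)) + 1 := by
    rw [card_insert_of_notMem h.notMem_left, card_insert_of_notMem h.notMem_right,
      card_insert_of_notMem h.notMem_union, card_union_of_disjoint h.disjoint]
    omega
  have hsign : (-1 : R) ^ (#(insert e A) + #(G.support A)) *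
      (-1) ^ (#(insert e B) + #(G.support B)) =
        (-1) ^ (#(insert e (A ∪ B)) + #(G.support (insert e (A ∪ B)))) := by
    rw [← pow_add, add_add_add_comm, hedges, ← h.card_support, add_add_add_comm]
    exact (pow_add _ _ 2).trans (by simp)
  rw [signedFlow, signedFlow, signedFlow, h.support_left, h.symm.support_left, ← hsign]
  linear_combination (-1) ^ (#(insert e A) + #(G.support A)) *
    (-1) ^ (#(insert e B) + #(G.support B)) * h.mul_flowValue q

lemma signedFlow_insert (he : e ∉ S) (h : G.Joins e x y) (hxy : x ≠ y) (hx : x ∈ G.support S)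
    (hy : y ∈ G.support S) :
    G.signedFlow q (insert e S) = (G.merge y x).signedFlow q S + G.signedFlow q S := by
  have hends : {x, y} ⊆ G.support S := by simp [insert_subset_iff, hx, hy]
  rw [signedFlow_merge hxy hx hy, signedFlow, signedFlow, flowValue_insert he h hxy,
    h.support_insert, union_eq_right.2 hends, card_insert_of_notMem he, add_right_comm, pow_succ]
  ring

lemma signedFlow_merge_union_of_degreeIn_eq_one (huy : u ≠ y) (hAB : Disjoint A B)
    (h : G.support A ∩ G.support B ⊆ {u, y}) (hu : u ∈ G.support (A ∪ B))
    (hA : G.degreeIn A y = 1) (hB : G.degreeIn B y = 1) :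
    (G.merge y u).signedFlow q (A ∪ B) = (1 - q) * G.signedFlow q (A ∪ B) := by
  have hy : y ∈ G.support (A ∪ B) :=
    support_mono subset_union_left (degreeIn_pos_iff.1 (hA ▸ one_pos))
  rw [signedFlow_merge huy hu hy, ← mul_flowValue_union_of_degreeIn_eq_one huy hAB h hA hB,
    signedFlow]
  ring

end SignedFlow

section Biconnected

variable [DecidableEq V] [DecidableEq E]

/-- No partition of `S` into two nonempty sets of edges with at most one common vertex exists. This
says in terms of edges that `S` lies in one block; a single edge always qualifies. -/
def IsBiconnected (G : Multigraph V E) (S : Finset E) : Prop :=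
  ∀ ⦃A B : Finset E⦄, A.Nonempty → B.Nonempty → Disjoint A B → A ∪ B = S →
    1 < #(G.support A ∩ G.support B)

variable {G : Multigraph V E} {e : E} {A B D S : Finset E} {x y w u v : V}

lemma exists_of_not_isBiconnected (h : ¬ G.IsBiconnected S) :
    ∃ A B : Finset E, A.Nonempty ∧ B.Nonempty ∧ Disjoint A B ∧ A ∪ B = S ∧
      #(G.support A ∩ G.support B) ≤ 1 := by
  simpa only [IsBiconnected, not_forall, not_lt, exists_prop] using h

lemma isBiconnected_insert (he : e ∉ D)
    (h : ∀ X Y : Finset E, X.Nonempty → Disjoint X Y → X ∪ Y = D →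
      1 < #(G.support X ∩ G.support (insert e Y))) : G.IsBiconnected (insert e D) := by
  have hmain : ∀ X Y : Finset E, X.Nonempty → Disjoint X Y → X ∪ Y = insert e D → e ∈ Y →
      1 < #(G.support X ∩ G.support Y) := by
    intro X Y hX hXY hD heY
    have heX : e ∉ X := disjoint_right.1 hXY heY
    have hY : insert e (Y.erase e) = Y := insert_erase heY
    rw [← hY]
    refine h X _ hX (disjoint_of_subset_right (erase_subset e Y) hXY) ?_
    rw [← erase_insert he, ← hD, erase_union_distrib, erase_eq_of_notMem heX]
  intro X Y hX hY hXY hD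
  obtain he | he := mem_union.1 (hD.symm ▸ mem_insert_self e D)
  · rw [inter_comm]
    exact hmain Y X hY hXY.symm ((union_comm Y X).trans hD) he
  · exact hmain X Y hX hXY hD he

lemma IsBiconnected.ends_insert (h : G.IsBiconnected (insert e D)) (he : e ∉ D) (hD : D.Nonempty)
    (hxy : G.Joins e x y) : x ≠ y ∧ x ∈ G.support D ∧ y ∈ G.support D := by
  have hcard : 1 < #({x, y} ∩ G.support D) := by
    simpa only [hxy.support_singleton] using
      h (singleton_nonempty e) hD (disjoint_singleton_left.2 he) (insert_eq e D).symm
  have hsub : {x, y} ⊆ G.support D := inter_eq_left.1 <|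
    eq_of_subset_of_card_le inter_subset_left (card_le_two.trans hcard)
  rw [inter_eq_left.2 hsub] at hcard
  rw [insert_subset_iff, singleton_subset_iff] at hsub
  exact ⟨fun hxy => by simp [hxy] at hcard, hsub⟩

lemma IsBiconnected.ne_of_joins (h : G.IsBiconnected S) (hS : 1 < #S) (he : e ∈ S)
    (hxy : G.Joins e x y) : x ≠ y :=
  (IsBiconnected.ends_insert ((insert_erase he).symm ▸ h) (notMem_erase e S)
    ((one_lt_card_iff_nontrivial.1 hS).erase_nonempty) hxy).1

lemma IsBiconnected.exists_mem_notMem (h : G.IsBiconnected (insert e (A ∪ B))) (he : e ∉ A ∪ B)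
    (hAB : Disjoint A B) (hB : B.Nonempty) (hcard : #(G.support A ∩ G.support B) ≤ 1) :
    ∃ y ∈ G.support {e}, y ∈ G.support B ∧ y ∉ G.support A := by
  by_contra! hends
  rw [mem_union, not_or] at he
  refine hcard.not_gt (lt_of_lt_of_le (h (insert_nonempty e A) hB
    (disjoint_insert_left.2 ⟨he.2, hAB⟩) (insert_union e A B)) (card_le_card ?_))
  rw [insert_eq, support_union, union_inter_distrib_right]
  refine union_subset (fun p hp => ?_) Subset.rfl
  obtain ⟨hpe, hpB⟩ := mem_inter.1 hp
  exact mem_inter.2 ⟨hends p hpe hpB, hpB⟩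

lemma IsBiconnected.exists_isRing (h : G.IsBiconnected (insert e D)) (he : e ∉ D)
    (hD : ¬ G.IsBiconnected D) : ∃ A B x y w, A ∪ B = D ∧ G.IsRing e A B x y w := by
  obtain ⟨A, B, hA, hB, hAB, rfl, hcard⟩ := exists_of_not_isBiconnected hD
  obtain ⟨y, hye, hyB, hyA⟩ := h.exists_mem_notMem he hAB hB hcard
  obtain ⟨x, hxe, hxA, hxB⟩ := (union_comm A B ▸ h).exists_mem_notMem (union_comm A B ▸ he)
    hAB.symm hA (inter_comm (G.support A) _ ▸ hcard)
  rw [mem_union, not_or] at he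
  have hjoins := joins_of_mem_support_singleton (ne_of_mem_of_not_mem hxA hyA) hxe hye
  have hcut := h (insert_nonempty e A) hB (disjoint_insert_left.2 ⟨he.2, hAB⟩) (insert_union e A B)
  have hshared : G.support (insert e A) ∩ G.support B ⊆ insert y (G.support A ∩ G.support B) := by
    rw [hjoins.support_insert, union_inter_distrib_right, insert_inter_of_notMem hxB, insert_eq]
    exact union_subset_union_left inter_subset_left
  have hle := (card_le_card hshared).trans (card_insert_le _ _)
  obtain ⟨w, hw⟩ := card_eq_one.1 (show #(G.support A ∩ G.support B) = 1 by omega)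
  exact ⟨A, B, x, y, w, rfl, he.1, he.2, hAB, hjoins, hw, hxA, hxB, hyB, hyA⟩

namespace IsRing

lemma isBiconnected_left (hR : G.IsRing e A B x y w) (h : G.IsBiconnected (insert e (A ∪ B))) :
    (G.reattach e x w).IsBiconnected (insert e A) := by
  refine isBiconnected_insert hR.notMem_left fun X Y hX hXY hA => ?_
  subst hA
  have hXA : G.support X ⊆ G.support (X ∪ Y) := support_mono subset_union_left
  have heX : e ∉ X := fun heX => hR.notMem_left (mem_union_left Y heX)
  have heY : e ∉ Y := fun heY => hR.notMem_left (mem_union_right X heY)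
  have hdisj : Disjoint X (insert e (Y ∪ B)) := by
    simp only [disjoint_insert_right, disjoint_union_right]
    exact ⟨heX, hXY, (disjoint_union_left.1 hR.disjoint).1⟩
  refine (h hX (insert_nonempty e _) hdisj (by grind)).trans_le (card_le_card fun p hp => ?_)
  rw [support_reattach heX, (joins_reattach G e x w).support_insert, support_reattach heY]
  rw [hR.joins.support_insert, support_union] at hp
  have hw : p ∈ G.support (X ∪ Y) → p ∈ G.support B → p = w := fun hpA hpB =>
    mem_singleton.1 (hR.support_inter ▸ Finset.mem_inter.2 ⟨hpA, hpB⟩)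
  have hy : p ∈ G.support (X ∪ Y) → p ≠ y := fun hpA hpy => hR.y_notMem (hpy ▸ hpA)
  simp only [Finset.mem_inter, mem_union, mem_insert, mem_singleton] at hp ⊢
  have := @hXA p
  tauto

end IsRing

lemma IsBiconnected.forall_joins (h : G.IsBiconnected S) (hu : u ∈ G.support S)
    (hv : ∀ e ∈ S, ∀ y, G.Joins e u y → y = v) : ∀ e ∈ S, G.Joins e u v := by
  have hstar : ∀ e ∈ S, (G.fst e = u ∨ G.snd e = u) → G.Joins e u v := fun e he heu => by
    obtain ⟨y, hy⟩ := exists_joins heu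
    exact hv e he y hy ▸ hy
  let star : Finset E := {e ∈ S | G.fst e = u ∨ G.snd e = u}
  have hne : star.Nonempty := filter_nonempty_iff.2 (mem_support.1 hu)
  have hstar_eq : star = S := by
    by_contra hS
    have hsdiff : (S \ star).Nonempty :=
      sdiff_nonempty.2 fun hsub => hS (Subset.antisymm (filter_subset _ S) hsub)
    refine (h hne hsdiff disjoint_sdiff (union_sdiff_of_subset (filter_subset _ S))).not_ge
      (card_le_card (t := {v}) fun p hp => ?_)
    obtain ⟨hp, hp'⟩ := mem_inter.1 hp
    rw [support_of_forall_joins hne fun e he => hstar e (mem_filter.1 he).1 (mem_filter.1 he).2,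
      mem_insert] at hp
    refine hp.resolve_left fun hpu => ?_
    obtain ⟨f, hf, hfp⟩ := mem_support.1 hp'
    exact (mem_sdiff.1 hf).2 (mem_filter.2 ⟨(mem_sdiff.1 hf).1, hpu ▸ hfp⟩)
  exact fun e he => hstar e he (mem_filter.1 (hstar_eq.symm ▸ he : e ∈ star)).2

lemma IsBiconnected.exists_series (h : G.IsBiconnected D) (hm : ¬ (G.merge y u).IsBiconnected D)
    (hdeg : G.degreeIn D y ≤ 2) :
    ∃ A B, A ∪ B = D ∧ Disjoint A B ∧ G.support A ∩ G.support B ⊆ {u, y} ∧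
      G.degreeIn A y = 1 ∧ G.degreeIn B y = 1 := by
  obtain ⟨A, B, hA, hB, hAB, rfl, hcard⟩ := exists_of_not_isBiconnected hm
  obtain ⟨a, ha, b, hb, hab⟩ := one_lt_card.1 (h hA hB hAB rfl)
  have himage : ∀ p ∈ G.support A ∩ G.support B, ∀ r ∈ G.support A ∩ G.support B,
      Function.update id y u p = Function.update id y u r := by
    have hmem : ∀ p ∈ G.support A ∩ G.support B, Function.update id y u p ∈
        (G.merge y u).support A ∩ (G.merge y u).support B := fun p hp => by
      rw [merge, support_map, support_map]
      exact mem_inter.2 ⟨mem_image_of_mem _ (mem_inter.1 hp).1,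
        mem_image_of_mem _ (mem_inter.1 hp).2⟩
    exact fun p hp r hr => card_le_one.1 hcard _ (hmem p hp) _ (hmem r hr)
  have hy : y ∈ G.support A ∩ G.support B := by
    have := himage a ha b hb
    simp only [Function.update_apply, id] at this
    grind
  have hsub : G.support A ∩ G.support B ⊆ {u, y} := fun p hp => by
    have := himage p hp y hy
    simp only [Function.update_apply, id, if_true] at this
    rw [mem_insert, mem_singleton]
    grind
  rw [mem_inter, ← degreeIn_pos_iff, ← degreeIn_pos_iff] at hy
  rw [degreeIn_union hAB] at hdeg
  exact ⟨A, B, rfl, hAB, hsub, by omega, by omega⟩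

end Biconnected

section BridgelessBlock

variable [DecidableEq V]

/-- Every vertex outside `W` has degree at most `3` in the subgraph with edge set `S`. -/
def SubcubicOff (G : Multigraph V E) (W : Set V) (S : Finset E) : Prop :=
  ∀ p ∉ W, G.degreeIn S p ≤ 3

/-- The edges `S` form a block that is not a bridge: `S` is nonempty, biconnected and not a single
link. A single loop qualifies. -/
structure IsBridgelessBlock [DecidableEq E] (G : Multigraph V E) (S : Finset E) : Prop where
  nonempty : S.Nonempty
  isBiconnected : G.IsBiconnected S
  loop_of_eq_singleton : ∀ e, S = {e} → G.fst e = G.snd e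

variable {G : Multigraph V E} {W : Set V} {A B D S : Finset E} {e : E} {x y w u : V}

lemma SubcubicOff.mono (h : G.SubcubicOff W B) (hAB : A ⊆ B) : G.SubcubicOff W A :=
  fun p hp => (degreeIn_mono hAB p).trans (h p hp)

lemma SubcubicOff.merge (h : G.SubcubicOff W S) (hx : x ∈ W) :
    (G.merge y x).SubcubicOff W S :=
  fun p hp => (degreeIn_merge_le (ne_of_mem_of_not_mem hx hp).symm).trans (h p hp)

lemma SubcubicOff.exists_mem_support {v : V} (h : G.SubcubicOff {u, v} S) (hS : S.Nonempty) :
    ∃ z ∈ G.support S, G.SubcubicOff {z, v} S := by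
  obtain ⟨e, he⟩ := hS
  by_cases hu : u ∈ G.support S
  · exact ⟨u, hu, h⟩
  refine ⟨_, (G.joins_fst_snd e).mem_support he, fun p hp => ?_⟩
  by_cases hpu : p = u
  · have hzero := mt degreeIn_pos_iff.1 hu
    subst hpu
    omega
  · exact h p (by simp_all)

variable [DecidableEq E]

lemma SubcubicOff.left_of_isRing (h : G.SubcubicOff W (insert e (A ∪ B)))
    (hR : G.IsRing e A B x y w) : (G.reattach e x w).SubcubicOff W (insert e A) :=
  fun p hp => (hR.degreeIn_left_le p).trans (h p hp)

lemma IsBiconnected.isBridgelessBlock (h : G.IsBiconnected S) (hS : 1 < #S) :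
    G.IsBridgelessBlock S :=
  ⟨card_pos.1 (zero_lt_one.trans hS), h, fun e he => by simp [he] at hS⟩

lemma IsBiconnected.isBridgelessBlock_merge (h : (G.merge y u).IsBiconnected S) (huy : u ≠ y)
    (hu : u ∈ G.support S) (hy : y ∈ G.support S) : (G.merge y u).IsBridgelessBlock S := by
  refine ⟨nonempty_of_mem_support hu, h, ?_⟩
  rintro e rfl
  exact ((joins_of_mem_support_singleton huy hu hy).map _).fst_eq_snd_iff.2 (by simp [huy])

lemma IsRing.isBridgelessBlock_left (hR : G.IsRing e A B x y w)
    (h : G.IsBiconnected (insert e (A ∪ B))) :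
    (G.reattach e x w).IsBridgelessBlock (insert e A) :=
  (hR.isBiconnected_left h).isBridgelessBlock <| by
    rw [card_insert_of_notMem hR.notMem_left]
    exact Nat.succ_lt_succ (nonempty_of_mem_support hR.x_mem).card_pos

end BridgelessBlock

section Positivity

variable [CommRing R] [Finite V] [DecidableEq V] {G : Multigraph V E} {q : R} {D S : Finset E}
  {e : E} {x y w u v : V}

lemma IsBiconnected.signedFlow_eq_zero [DecidableEq E] (h : G.IsBiconnected S) (hS : S.Nonempty)
    (hblock : ¬ G.IsBridgelessBlock S) : G.signedFlow q S = 0 := by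
  have hlink : ∃ e, S = {e} ∧ G.fst e ≠ G.snd e := by
    by_contra! hloop
    exact hblock ⟨hS, h, hloop⟩
  obtain ⟨e, rfl, he⟩ := hlink
  exact signedFlow_singleton_of_ne he

variable [LinearOrder R] [IsStrictOrderedRing R]

lemma signedFlow_pos_of_forall_joins (hq : 1 < q) (hq' : q < 2) (huv : u ≠ v) (hS : 1 < #S)
    (h : ∀ e ∈ S, G.Joins e u v) : 0 < G.signedFlow q S := by
  have hpow : |(1 - q) ^ #S| < q - 1 := by
    rw [abs_pow, abs_sub_comm, abs_of_pos (sub_pos.2 hq)]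
    exact pow_lt_self_of_lt_one₀ (by linarith) (by linarith) hS
  refine (mul_pos_iff_of_pos_left (show 0 < q by linarith)).1 ?_
  rw [mul_signedFlow_of_forall_joins huv (card_pos.1 (by omega)) h]
  linarith [(abs_lt.1 hpow).1]

variable [DecidableEq E]

lemma IsRing.signedFlow_pos {A B : Finset E} (hR : G.IsRing e A B x y w) (hq : 1 < q)
    (hA : 0 < (G.reattach e x w).signedFlow q (insert e A))
    (hB : 0 < (G.reattach e y w).signedFlow q (insert e B)) :
    0 < G.signedFlow q (insert e (A ∪ B)) :=
  (mul_pos_iff_of_pos_left (sub_pos.2 hq)).1 (hR.mul_signedFlow q ▸ mul_pos hA hB)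

lemma IsBiconnected.signedFlow_insert_pos (h : G.IsBiconnected D) (he : e ∉ D)
    (huy : G.Joins e u y) (hne : u ≠ y) (hu : u ∈ G.support D) (hy : y ∈ G.support D)
    (hdeg : G.degreeIn D y ≤ 2) (hq : q < 2)
    (ih : G.IsBridgelessBlock D → 0 < G.signedFlow q D)
    (ihm : (G.merge y u).IsBridgelessBlock D → 0 < (G.merge y u).signedFlow q D) :
    0 < G.signedFlow q (insert e D) := by
  rw [signedFlow_insert he huy hne hu hy]
  by_cases hm : (G.merge y u).IsBiconnected D
  · refine add_pos_of_pos_of_nonneg (ihm (hm.isBridgelessBlock_merge hne hu hy)) ?_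
    by_cases hblock : G.IsBridgelessBlock D
    · exact (ih hblock).le
    · exact (h.signedFlow_eq_zero (nonempty_of_mem_support hu) hblock).ge
  · obtain ⟨A, B, rfl, hAB, hsub, hA, hB⟩ := h.exists_series hm hdeg
    have hcard : 1 < #(A ∪ B) := by
      have hApos := (nonempty_of_mem_support (degreeIn_pos_iff.1 (hA ▸ one_pos))).card_pos
      have hBpos := (nonempty_of_mem_support (degreeIn_pos_iff.1 (hB ▸ one_pos))).card_pos
      rw [card_union_of_disjoint hAB]
      omega
    -- The sum collapses to `2 - q` times a positive number: here `q < 2` is sharp.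
    rw [signedFlow_merge_union_of_degreeIn_eq_one hne hAB hsub hu hA hB]
    linarith [mul_pos (sub_pos.2 hq) (ih (h.isBridgelessBlock hcard))]

theorem IsBridgelessBlock.signedFlow_pos (h : G.IsBridgelessBlock S)
    (hW : G.SubcubicOff {u, v} S) (hq : 1 < q) (hq' : q < 2) : 0 < G.signedFlow q S := by
  induction S using Finset.strongInduction generalizing G u with | _ S ih
  obtain ⟨hS, hbi, hloop⟩ := h
  obtain ⟨u, hu, hW⟩ := hW.exists_mem_support hS
  obtain hcard | hcard := (Nat.succ_le_of_lt hS.card_pos).eq_or_lt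
  · obtain ⟨e, rfl⟩ := card_eq_one.1 hcard.symm
    rw [signedFlow_singleton_of_loop (hloop e rfl)]
    exact sub_pos.2 hq
  by_cases hv : ∀ e ∈ S, ∀ y, G.Joins e u y → y = v
  · have hjoins := hbi.forall_joins hu hv
    have ⟨e, he⟩ := hS
    exact signedFlow_pos_of_forall_joins hq hq' (hbi.ne_of_joins hcard he (hjoins e he)) hcard
      hjoins
  push Not at hv
  obtain ⟨e, he, y, huy, hyv⟩ := hv
  obtain ⟨D, heD, rfl⟩ : ∃ D, e ∉ D ∧ S = insert e D :=
    ⟨S.erase e, notMem_erase e S, (insert_erase he).symm⟩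
  have hD : D.Nonempty := by
    rw [card_insert_of_notMem heD] at hcard
    exact card_pos.1 (Nat.succ_lt_succ_iff.1 hcard)
  by_cases hDbi : G.IsBiconnected D
  · obtain ⟨hne, hu, hy⟩ := hbi.ends_insert heD hD huy
    have hdeg : G.degreeIn D y + (0 + 1) ≤ 3 := by
      simpa [degreeIn_insert heD huy, hne] using hW y (by simp [hne.symm, hyv])
    have hWD := hW.mono (subset_insert e D)
    exact hDbi.signedFlow_insert_pos heD huy hne hu hy (by omega) hq'
      (fun hblock => ih D (ssubset_insert heD) hblock hWD)
      (fun hblock => ih D (ssubset_insert heD) hblock (hWD.merge (Set.mem_insert u {v})))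
  · obtain ⟨A, B, x, y, w, rfl, hR⟩ := hbi.exists_isRing heD hDbi
    have hswap : insert e (A ∪ B) = insert e (B ∪ A) := by rw [union_comm]
    exact hR.signedFlow_pos hq
      (ih _ hR.left_ssubset (hR.isBridgelessBlock_left hbi) (hW.left_of_isRing hR))
      (ih _ (hswap ▸ hR.symm.left_ssubset) (hR.symm.isBridgelessBlock_left (hswap ▸ hbi))
        ((hswap ▸ hW).left_of_isRing hR.symm))

end Positivity

section Bridgeless

variable {G : Multigraph V E} {W : Set V} {A B S : Finset E} {e : E} {u v w : V}

/-- The subgraph with edge set `S` has no bridge: the ends of each edge of `S` stay connected when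
this edge is deleted. -/
def BridgelessOn (G : Multigraph V E) (S : Finset E) : Prop :=
  ∀ e ∈ S, G.Reach (S \ {e}) (G.fst e) (G.snd e)

lemma Bridgeless.bridgelessOn_univ [Finite V] [Fintype E] (h : G.Bridgeless) :
    G.BridgelessOn univ := by
  intro e _
  by_contra hreach
  refine h e ?_
  have hset : {e' | e' ≠ e} = ((univ : Finset E) : Set E) \ {e} := by ext; simp
  rw [IsBridge, hset]
  exact ncomp_lt_ncomp_of_not_reach (Set.subset_univ _) (reachSetoid_fst_snd (Set.mem_univ e))
    hreach

lemma BridgelessOn.fst_eq_snd (h : G.BridgelessOn {e}) : G.fst e = G.snd e := by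
  have hreach : G.reachSetoid (({e} : Finset E) \ {e}) (G.fst e) (G.snd e) :=
    h e (mem_singleton_self e)
  rwa [coe_singleton, sdiff_self, Set.bot_eq_empty, reachSetoid_empty] at hreach

lemma BridgelessOn.left [DecidableEq V] [DecidableEq E] (h : G.BridgelessOn (A ∪ B))
    (hw : G.support A ∩ G.support B ⊆ {w}) : G.BridgelessOn A := by
  intro e he
  -- Retract onto the vertices of `A`, collapsing everything else to `w`.
  let ρ : V → V := fun p => if p ∈ G.support A then p else w
  have hρA : ∀ p ∈ G.support A, ρ p = p := fun p hp => if_pos hp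
  have hρB : ∀ p ∈ G.support B, ρ p = w := fun p hp => by
    by_cases hpA : p ∈ G.support A
    · exact (hρA p hpA).trans (mem_singleton.1 (hw (mem_inter.2 ⟨hpA, hp⟩)))
    · exact if_neg hpA
  have hends : ∀ {S f}, f ∈ S → G.fst f ∈ G.support S ∧ G.snd f ∈ G.support S := fun hf =>
    ⟨(G.joins_fst_snd _).mem_support hf, (G.joins_fst_snd _).symm.mem_support hf⟩
  have hretract : G.reachSetoid ((A ∪ B : Finset E) \ {e}) ≤
      Setoid.comap ρ (G.reachSetoid (A \ {e})) := by
    refine reachSetoid_le_iff.2 fun f hf => ?_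
    rw [Setoid.comap_rel]
    obtain hfA | hfB := mem_union.1 (mem_coe.1 hf.1)
    · rw [hρA _ (hends hfA).1, hρA _ (hends hfA).2]
      exact reachSetoid_fst_snd ⟨hfA, hf.2⟩
    · rw [hρB _ (hends hfB).1, hρB _ (hends hfB).2]
  have hreach := hretract (h e (mem_union_left B he))
  rwa [Setoid.comap_rel, hρA _ (hends he).1, hρA _ (hends he).2] at hreach

variable [CommRing R] [LinearOrder R] [IsStrictOrderedRing R] [Finite V] [DecidableEq V]
  {q : R}

theorem BridgelessOn.flowValue_ne_zero (h : G.BridgelessOn S) (hW : G.SubcubicOff {u, v} S)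
    (hq : 1 < q) (hq' : q < 2) : G.flowValue q S ≠ 0 := by
  classical
  induction S using Finset.strongInduction with | _ S ih
  obtain rfl | hS := S.eq_empty_or_nonempty
  · rw [flowValue_empty]
    exact one_ne_zero
  by_cases hbi : G.IsBiconnected S
  · have hblock : G.IsBridgelessBlock S := ⟨hS, hbi, by rintro e rfl; exact h.fst_eq_snd⟩
    exact right_ne_zero_of_mul (hblock.signedFlow_pos hW hq hq').ne'
  · obtain ⟨A, B, hA, hB, hAB, rfl, hcard⟩ := exists_of_not_isBiconnected hbi
    have : Nonempty V := hA.elim fun e _ => ⟨G.fst e⟩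
    obtain ⟨w, hw⟩ := card_le_one_iff_subset_singleton.1 hcard
    rw [flowValue_union hAB hw]
    have hBA : G.support B ∩ G.support A ⊆ {w} := (inter_comm _ _).trans_subset hw
    have hlt : B ⊂ A ∪ B := union_comm B A ▸ ssubset_union_left_of_disjoint hAB.symm hA
    exact mul_ne_zero
      (ih A (ssubset_union_left_of_disjoint hAB hB) (h.left hw) (hW.mono subset_union_left))
      (ih B hlt (BridgelessOn.left (union_comm A B ▸ h) hBA) (hW.mono subset_union_right))

end Bridgeless

end Multigraph

open Multigraph in
/-- Dong. If `G` is a bridgeless finite multigraph with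
`|W(G)| ≤ 2`, where `W(G)` is the set of vertices of degree larger than `3`, then
`G` has no flow root in `(1,2)`. -/
theorem flowPoly_ne_zero_of_at_most_two_big_degree {V E : Type} [Fintype V] [Fintype E]
    (G : Multigraph V E) (hbl : G.Bridgeless)
    (hW : {v | 3 < G.degree v}.ncard ≤ 2) :
    ∀ q : ℝ, 1 < q → q < 2 → G.flowPoly.eval q ≠ 0 := by
  intro q hq hq'
  classical
  rw [eval_flowPoly]
  obtain _ | _ := isEmpty_or_nonempty V
  · have : IsEmpty E := Function.isEmpty G.fst
    rw [Finset.univ_eq_empty, flowValue_empty]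
    exact one_ne_zero
  · obtain ⟨u, v, huv⟩ := exists_subset_pair_of_ncard_le_two hW
    refine hbl.bridgelessOn_univ.flowValue_ne_zero (u := u) (v := v) (fun p hp => ?_) hq hq'
    rw [degreeIn_univ]
    exact not_lt.1 fun hdeg => hp (huv hdeg)
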